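/- Let k ≥ 2 and i be integers with 1 ≤ i ≤ k/2. Then there exists a sequence (f_v)_{v ∈ ℕ}, where f_v is a k-uniform hypergraph property on v vertices, together with constants c, C > 0 and v₀ ∈ ℕ, such that for all v ≥ v₀: c·v^{k−i} ≤ s(f_v) ≤ C·v^{k−i} and c·v^k ≤ bs(f_v) ≤ C·v^k; that is, s(f_v) = Θ(v^{k−i}) and bs(f_v) = Θ(v^k). -/

import Mathlib

open Finset

/-- The coordinate set: `k`-element subsets of `Fin v`. -/
abbrev KSet (v k : ℕ) : Type := {S : Finset (Fin v) // S.card = k}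

/-- A `k`-uniform hypergraph on `Fin v`: a Boolean function on `k`-sets. -/
abbrev HGraph (v k : ℕ) : Type := KSet v k → Bool

/-- Sensitivity of `f` at input `x`: the number of coordinates whose flip changes `f`. -/
def localSens {I : Type} [Fintype I] [DecidableEq I]
    (f : (I → Bool) → Bool) (x : I → Bool) : ℕ :=
  (Finset.univ.filter fun i => f (Function.update x i (!x i)) ≠ f x).card

/-- Sensitivity of `f`: maximum of `localSens f x` over all inputs `x`. -/
def sens {I : Type} [Fintype I] [DecidableEq I] (f : (I → Bool) → Bool) : ℕ :=
  Finset.univ.sup (localSens f)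

/-- `sensOn b f` is `s^b(f)`: max sensitivity over inputs with `f x = b`. -/
def sensOn {I : Type} [Fintype I] [DecidableEq I] (b : Bool) (f : (I → Bool) → Bool) : ℕ :=
  (Finset.univ.filter fun x => f x = b).sup (localSens f)

/-- Flip all the coordinates of `x` in the block `B`. -/
def flipBlock {I : Type} [DecidableEq I] (x : I → Bool) (B : Finset I) : I → Bool :=
  fun i => if i ∈ B then !x i else x i

/-- Block sensitivity of `f` at `x`: maximum number of pairwise disjoint sensitive blocks. -/
noncomputable def localBlockSens {I : Type} [Fintype I] [DecidableEq I]
    (f : (I → Bool) → Bool) (x : I → Bool) : ℕ :=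
  sSup {n : ℕ | ∃ B : Fin n → Finset I,
    (∀ j, f (flipBlock x (B j)) ≠ f x) ∧
    ∀ j j', j ≠ j' → Disjoint (B j) (B j')}

/-- Block sensitivity of `f`. -/
noncomputable def blockSens {I : Type} [Fintype I] [DecidableEq I]
    (f : (I → Bool) → Bool) : ℕ :=
  Finset.univ.sup (localBlockSens f)

/-- Image of a `k`-set under a permutation of the vertices. -/
def permKSet {v k : ℕ} (σ : Equiv.Perm (Fin v)) (S : KSet v k) : KSet v k :=
  ⟨S.1.map σ.toEmbedding, by rw [Finset.card_map]; exact S.2⟩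

/-- A `k`-uniform hypergraph property: invariance under all vertex permutations,
where `(σ • G) S = G (σ⁻¹ S)`. -/
def IsHypergraphProperty {v k : ℕ} (f : HGraph v k → Bool) : Prop :=
  ∀ (σ : Equiv.Perm (Fin v)) (G : HGraph v k),
    f (fun S => G (permKSet σ⁻¹ S)) = f G

/-- `T` is an isolated clique of `G`: it has `k + 1` vertices, and among the `k`-sets meeting `T`
in at least `i` vertices the edges of `G` are exactly those contained in `T`. -/
def IsIsolatedClique {v k : ℕ} (i : ℕ) (G : HGraph v k) (T : Finset (Fin v)) : Prop :=
  T.card = k + 1 ∧ ∀ S : KSet v k, i ≤ (S.1 ∩ T).card → (G S = true ↔ S.1 ⊆ T)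

open Classical in
/-- The property of containing an isolated clique. -/
noncomputable def hasIsolatedClique (k i v : ℕ) (G : HGraph v k) : Bool :=
  decide (∃ T, IsIsolatedClique i G T)

/-- The complete `k`-uniform hypergraph on the vertex set `T`. -/
def cliqueOn {v : ℕ} (k : ℕ) (T : Finset (Fin v)) : HGraph v k := fun S => decide (S.1 ⊆ T)

/-- The `k`-set obtained by deleting a vertex from a `(k + 1)`-set. -/
def eraseKSet {v k : ℕ} {T : Finset (Fin v)} (hT : T.card = k + 1) {q : Fin v} (hq : q ∈ T) :
    KSet v k :=
  ⟨T.erase q, by rw [Finset.card_erase_of_mem hq, hT, Nat.add_sub_cancel]⟩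

section General

variable {I : Type} [Fintype I] [DecidableEq I]

lemma localSens_le_sens (f : (I → Bool) → Bool) (x : I → Bool) : localSens f x ≤ sens f :=
  Finset.le_sup (Finset.mem_univ x)

lemma card_le_of_disjoint_sensitive_blocks (f : (I → Bool) → Bool) (x : I → Bool) {n : ℕ}
    (B : Fin n → Finset I) (hB : ∀ j, f (flipBlock x (B j)) ≠ f x)
    (hd : ∀ j j', j ≠ j' → Disjoint (B j) (B j')) : n ≤ Fintype.card I := by
  have hne : ∀ j, (B j).Nonempty := by
    intro j
    by_contra h
    rw [Finset.not_nonempty_iff_eq_empty] at h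
    apply hB j
    exact congrArg f (funext fun a => by simp [h, flipBlock])
  choose b hb using hne
  have hinj : Function.Injective b := by
    intro j j' h
    by_contra hj
    exact Finset.disjoint_left.mp (hd j j' hj) (hb j) (h ▸ hb j')
  simpa using Fintype.card_le_of_injective b hinj

lemma blockSens_le_card (f : (I → Bool) → Bool) : blockSens f ≤ Fintype.card I := by
  refine Finset.sup_le fun x _ => csSup_le' ?_
  rintro n ⟨B, hB, hd⟩
  exact card_le_of_disjoint_sensitive_blocks f x B hB hd

lemma card_le_blockSens {ι : Type*} (f : (I → Bool) → Bool) (x : I → Bool) (F : Finset ι)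
    (B : ι → Finset I) (hB : ∀ j ∈ F, f (flipBlock x (B j)) ≠ f x)
    (hd : ∀ j ∈ F, ∀ j' ∈ F, j ≠ j' → Disjoint (B j) (B j')) : F.card ≤ blockSens f := by
  refine le_trans ?_ (Finset.le_sup (f := localBlockSens f) (Finset.mem_univ x))
  refine le_csSup ⟨Fintype.card I, ?_⟩ ⟨fun j => B (F.equivFin.symm j), ?_, ?_⟩
  · rintro n ⟨B, hB, hd⟩
    exact card_le_of_disjoint_sensitive_blocks f x B hB hd
  · exact fun j => hB _ (F.equivFin.symm j).2
  · intro j j' hj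
    refine hd _ (F.equivFin.symm j).2 _ (F.equivFin.symm j').2 fun h => hj ?_
    exact F.equivFin.symm.injective (Subtype.ext h)

end General

section IsolatedClique

variable {v k i : ℕ}

lemma card_kSet : Fintype.card (KSet v k) = v.choose k := by
  rw [Fintype.card_finset_len, Fintype.card_fin]

lemma hasIsolatedClique_eq_true {G : HGraph v k} :
    hasIsolatedClique k i v G = true ↔ ∃ T, IsIsolatedClique i G T := by
  simp [hasIsolatedClique]

lemma IsIsolatedClique.perm {G : HGraph v k} {T : Finset (Fin v)} (h : IsIsolatedClique i G T)
    (σ : Equiv.Perm (Fin v)) :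
    IsIsolatedClique i (fun S => G (permKSet σ⁻¹ S)) (T.map σ.toEmbedding) := by
  refine ⟨by rw [Finset.card_map, h.1], fun S hS => ?_⟩
  have hmap : (permKSet σ⁻¹ S).1.map σ.toEmbedding = S.1 := by
    ext x
    simp [permKSet, Equiv.Perm.inv_def]
  have key := h.2 (permKSet σ⁻¹ S)
  rw [← hmap, ← Finset.map_inter, Finset.card_map] at hS
  rw [key hS, ← hmap, Finset.map_subset_map]

lemma isHypergraphProperty_hasIsolatedClique (k i v : ℕ) :
    IsHypergraphProperty (hasIsolatedClique k i v) := by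
  intro σ G
  rw [Bool.eq_iff_iff, hasIsolatedClique_eq_true, hasIsolatedClique_eq_true]
  constructor
  · rintro ⟨T, hT⟩
    have h := hT.perm σ⁻¹
    have hG : (fun S => G (permKSet σ⁻¹ (permKSet (σ⁻¹)⁻¹ S))) = G := by
      funext S
      congr 1
      apply Subtype.ext
      ext x
      simp [permKSet, Equiv.Perm.inv_def]
    exact ⟨_, hG ▸ h⟩
  · rintro ⟨T, hT⟩
    exact ⟨_, hT.perm σ⟩

lemma isIsolatedClique_cliqueOn {T : Finset (Fin v)} (hT : T.card = k + 1) :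
    IsIsolatedClique i (cliqueOn k T) T :=
  ⟨hT, fun S _ => by simp [cliqueOn]⟩

lemma IsIsolatedClique.apply_eq_true {G : HGraph v k} {T : Finset (Fin v)}
    (h : IsIsolatedClique i G T) (hik : i ≤ k) {S : KSet v k} (hS : S.1 ⊆ T) : G S = true :=
  (h.2 S (by rw [Finset.inter_eq_left.mpr hS, S.2]; exact hik)).mpr hS

/-- Only flips of `k`-sets meeting `T` in at least `i` vertices affect whether `T` is isolated. -/
lemma isIsolatedClique_update_iff {G : HGraph v k} {T : Finset (Fin v)} {S : KSet v k} {b : Bool}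
    (hS : ¬ i ≤ (S.1 ∩ T).card) :
    IsIsolatedClique i (Function.update G S b) T ↔ IsIsolatedClique i G T := by
  refine and_congr_right fun _ => forall_congr' fun R => imp_congr_right fun hR => ?_
  have hRS : R ≠ S := fun h => hS (h ▸ hR)
  rw [Function.update_of_ne hRS]

lemma exists_two_erase {T T' : Finset (Fin v)} (hk : 2 ≤ k) (hik : i + 1 ≤ k)
    (hT : T.card = k + 1) (hT' : T'.card = k + 1) (hne : T ≠ T') (hi : i ≤ (T ∩ T').card) :
    ∃ q₁ ∈ T', ∃ q₂ ∈ T', q₁ ≠ q₂ ∧ ∀ q, q = q₁ ∨ q = q₂ →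
      ¬ T'.erase q ⊆ T ∧ i ≤ (T'.erase q ∩ T).card := by
  have hsum := Finset.card_sdiff_add_card_inter T' T
  rw [Finset.inter_comm] at hi
  rcases Nat.lt_or_ge 1 (T' \ T).card with h | h
  · obtain ⟨a, ha, b, hb, hab⟩ := Finset.one_lt_card.mp h
    rw [Finset.mem_sdiff] at ha hb
    refine ⟨a, ha.1, b, hb.1, hab, ?_⟩
    rintro q (rfl | rfl)
    · refine ⟨fun hs => hb.2 (hs (Finset.mem_erase.mpr ⟨hab.symm, hb.1⟩)), ?_⟩
      rwa [Finset.erase_inter, Finset.erase_eq_of_notMem (by simp [ha.2])]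
    · refine ⟨fun hs => ha.2 (hs (Finset.mem_erase.mpr ⟨hab, ha.1⟩)), ?_⟩
      rwa [Finset.erase_inter, Finset.erase_eq_of_notMem (by simp [hb.2])]
  · have hsub : ¬ T' ⊆ T := fun hs =>
      hne (Finset.eq_of_subset_of_card_le hs (by rw [hT, hT'])).symm
    obtain ⟨x, hx', hx⟩ := Finset.not_subset.mp hsub
    obtain ⟨a, ha, b, hb, hab⟩ := Finset.one_lt_card.mp (show 1 < (T' ∩ T).card by omega)
    refine ⟨a, Finset.mem_of_mem_inter_left ha, b, Finset.mem_of_mem_inter_left hb, hab, ?_⟩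
    intro q hq
    have hqm : q ∈ T' ∩ T := by rcases hq with rfl | rfl <;> assumption
    refine ⟨fun hs => hx (hs (Finset.mem_erase.mpr ⟨?_, hx'⟩)), ?_⟩
    · rintro rfl
      exact hx (Finset.mem_of_mem_inter_right hqm)
    · rw [Finset.erase_inter, Finset.card_erase_of_mem hqm]
      omega

/-- Two equal-sign flips creating isolated cliques that share `i` vertices are the same flip. -/
lemma eq_of_isIsolatedClique_update {G : HGraph v k} {T T' : Finset (Fin v)} {S S' : KSet v k}
    (hk : 2 ≤ k) (hik : i + 1 ≤ k) (hG : ∀ T, ¬ IsIsolatedClique i G T)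
    (h : IsIsolatedClique i (Function.update G S (!G S)) T)
    (h' : IsIsolatedClique i (Function.update G S' (!G S')) T')
    (hSS' : G S = G S') (hi : i ≤ (T ∩ T').card) : S = S' := by
  have hTT' : T = T' := by
    by_contra hne
    obtain ⟨q₁, hq₁, q₂, hq₂, hq, hprop⟩ := exists_two_erase hk hik h.1 h'.1 hne hi
    have hval : ∀ q (hqT : q ∈ T'), q = q₁ ∨ q = q₂ →
        Function.update G S (!G S) (eraseKSet h'.1 hqT) = false ∧
        Function.update G S' (!G S') (eraseKSet h'.1 hqT) = true := by
      intro q hqT hqq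
      obtain ⟨hns, hc⟩ := hprop q hqq
      constructor
      · rw [← Bool.not_eq_true, h.2 (eraseKSet h'.1 hqT) hc]
        exact hns
      · exact h'.apply_eq_true (by omega) (Finset.erase_subset _ _)
    have h₁ := hval q₁ hq₁ (Or.inl rfl)
    have h₂ := hval q₂ hq₂ (Or.inr rfl)
    have hR : eraseKSet h'.1 hq₁ ≠ eraseKSet h'.1 hq₂ := by
      intro hR
      have hE : T'.erase q₁ = T'.erase q₂ := congrArg Subtype.val hR
      exact Finset.notMem_erase q₁ T' (hE ▸ Finset.mem_erase.mpr ⟨hq, hq₁⟩)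
    simp only [Function.update_apply] at h₁ h₂
    grind
  subst hTT'
  by_contra hne
  have hmeet : i ≤ (S.1 ∩ T).card := by
    by_contra hmeet
    exact hG T ((isIsolatedClique_update_iff hmeet).mp h)
  have h₁ := h.2 S hmeet
  have h₂ := h'.2 S hmeet
  rw [Function.update_self] at h₁
  rw [Function.update_of_ne hne, ← h₁] at h₂
  cases hGS : G S <;> simp [hGS] at h₂

lemma localSens_le_of_eq_false {G : HGraph v k} (hk : 2 ≤ k) (hik : i + 1 ≤ k)
    (hG : hasIsolatedClique k i v G = false) :
    localSens (hasIsolatedClique k i v) G ≤ v.choose i * 2 := by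
  have hG' : ∀ T, ¬ IsIsolatedClique i G T := by
    intro T hT
    rw [hasIsolatedClique_eq_true.mpr ⟨T, hT⟩] at hG
    exact Bool.noConfusion hG
  have hex : ∀ S : KSet v k, ∃ J : KSet v i,
      hasIsolatedClique k i v (Function.update G S (!G S)) ≠ hasIsolatedClique k i v G →
        ∃ T, IsIsolatedClique i (Function.update G S (!G S)) T ∧ J.1 ⊆ T := by
    intro S
    by_cases hS : hasIsolatedClique k i v (Function.update G S (!G S)) ≠ hasIsolatedClique k i v G
    · rw [hG, Bool.ne_false_iff, hasIsolatedClique_eq_true] at hS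
      obtain ⟨T, hT⟩ := hS
      obtain ⟨J, hJ, hJc⟩ := Finset.exists_subset_card_eq (show i ≤ T.card by rw [hT.1]; omega)
      exact ⟨⟨J, hJc⟩, fun _ => ⟨T, hT, hJ⟩⟩
    · obtain ⟨J, hJ, hJc⟩ := Finset.exists_subset_card_eq (show i ≤ S.1.card by rw [S.2]; omega)
      exact ⟨⟨J, hJc⟩, fun h => absurd h hS⟩
  choose J hJ using hex
  have hcard : (Finset.univ : Finset (KSet v i × Bool)).card = v.choose i * 2 := by
    rw [Finset.card_univ, Fintype.card_prod, card_kSet, Fintype.card_bool]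
  rw [← hcard]
  refine Finset.card_le_card_of_injOn (fun S => (J S, G S)) (fun _ _ => Finset.mem_univ _) ?_
  intro S hS S' hS' hE
  obtain ⟨hJJ, hGG⟩ := Prod.mk.inj hE
  obtain ⟨T, hT, hJT⟩ := hJ S (Finset.mem_filter.mp hS).2
  obtain ⟨T', hT', hJT'⟩ := hJ S' (Finset.mem_filter.mp hS').2
  refine eq_of_isIsolatedClique_update hk hik hG' hT hT' hGG ?_
  rw [← (J S).2]
  exact Finset.card_le_card (Finset.subset_inter hJT (hJJ ▸ hJT'))

lemma localSens_le_of_eq_true {G : HGraph v k} (hG : hasIsolatedClique k i v G = true) :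
    localSens (hasIsolatedClique k i v) G ≤ (k + 1).choose i * v.choose (k - i) := by
  obtain ⟨T, hT⟩ := hasIsolatedClique_eq_true.mp hG
  have hcard : (Finset.powersetCard i T ×ˢ
      Finset.powersetCard (k - i) (Finset.univ : Finset (Fin v))).card =
        (k + 1).choose i * v.choose (k - i) := by
    rw [Finset.card_product, Finset.card_powersetCard, Finset.card_powersetCard, hT.1,
      Finset.card_univ, Fintype.card_fin]
  have hex : ∀ S : KSet v k, ∃ J : Finset (Fin v),
      i ≤ (S.1 ∩ T).card → J ⊆ S.1 ∩ T ∧ J.card = i := by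
    intro S
    by_cases hS : i ≤ (S.1 ∩ T).card
    · obtain ⟨J, hJ⟩ := Finset.exists_subset_card_eq hS
      exact ⟨J, fun _ => hJ⟩
    · exact ⟨∅, fun h => absurd h hS⟩
  choose J hJ using hex
  have hmeet : ∀ S ∈ (Finset.univ.filter fun S : KSet v k =>
      hasIsolatedClique k i v (Function.update G S (!G S)) ≠ hasIsolatedClique k i v G),
      J S ⊆ S.1 ∩ T ∧ (J S).card = i := by
    intro S hS
    refine hJ S ?_
    by_contra hmeet
    refine (Finset.mem_filter.mp hS).2 ?_
    rw [hG, hasIsolatedClique_eq_true]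
    exact ⟨T, (isIsolatedClique_update_iff hmeet).mpr hT⟩
  rw [← hcard]
  refine Finset.card_le_card_of_injOn (fun S => (J S, S.1 \ J S)) ?_ ?_
  · intro S hS
    obtain ⟨hs, hc⟩ := hmeet S hS
    have hsub := hs.trans Finset.inter_subset_left
    simp only [Finset.coe_product, Set.mem_prod, Finset.mem_coe, Finset.mem_powersetCard]
    refine ⟨⟨hs.trans Finset.inter_subset_right, hc⟩, Finset.subset_univ _, ?_⟩
    rw [Finset.card_sdiff_of_subset hsub, S.2, hc]
  · intro S hS S' hS' hE
    obtain ⟨hJJ, hD⟩ := Prod.mk.inj hE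
    have hsub := (hmeet S hS).1.trans Finset.inter_subset_left
    have hsub' := (hmeet S' hS').1.trans Finset.inter_subset_left
    apply Subtype.ext
    rw [← Finset.sdiff_union_of_subset hsub, ← Finset.sdiff_union_of_subset hsub', hD, hJJ]

lemma sens_hasIsolatedClique_le (hk : 2 ≤ k) (hik : i + 1 ≤ k) :
    sens (hasIsolatedClique k i v) ≤ max (v.choose i * 2) ((k + 1).choose i * v.choose (k - i)) := by
  refine Finset.sup_le fun G _ => ?_
  cases hG : hasIsolatedClique k i v G
  · exact le_max_of_le_left (localSens_le_of_eq_false hk hik hG)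
  · exact le_max_of_le_right (localSens_le_of_eq_true hG)

/-- Adding to a clique an edge that meets it in at least `i` vertices leaves no isolated clique. -/
lemma not_isIsolatedClique_update_cliqueOn {T T' : Finset (Fin v)} {S : KSet v k} (hk : 2 ≤ k)
    (hik : i ≤ k) (hT : T.card = k + 1) (hS : i ≤ (S.1 ∩ T).card) (hST : ¬ S.1 ⊆ T) :
    ¬ IsIsolatedClique i (Function.update (cliqueOn k T) S true) T' := by
  intro h
  by_cases hne : T' = T
  · subst hne
    exact hST ((h.2 S hS).mp (Function.update_self _ _ _))
  · have hsub : ¬ T' ⊆ T := fun hs =>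
      hne (Finset.eq_of_subset_of_card_le hs (by rw [hT, h.1]))
    obtain ⟨x, hx', hx⟩ := Finset.not_subset.mp hsub
    obtain ⟨a, ha, b, hb, hab⟩ := Finset.one_lt_card.mp
      (show 1 < (T'.erase x).card by rw [Finset.card_erase_of_mem hx', h.1]; omega)
    have key : ∀ q (hq : q ∈ T'.erase x), eraseKSet h.1 (Finset.mem_of_mem_erase hq) = S := by
      intro q hq
      by_contra hR
      have htrue := h.apply_eq_true hik (S := eraseKSet h.1 (Finset.mem_of_mem_erase hq))
        (Finset.erase_subset _ _)
      rw [Function.update_of_ne hR, cliqueOn, decide_eq_true_eq] at htrue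
      exact hx (htrue (Finset.mem_erase.mpr ⟨(Finset.ne_of_mem_erase hq).symm, hx'⟩))
    have hE : T'.erase a = T'.erase b := congrArg Subtype.val ((key a ha).trans (key b hb).symm)
    exact Finset.notMem_erase a T'
      (hE ▸ Finset.mem_erase.mpr ⟨hab, Finset.mem_of_mem_erase ha⟩)

lemma choose_le_sens_hasIsolatedClique (hk : 2 ≤ k) (hik : i + 1 ≤ k) (hv : k + 1 ≤ v) :
    (v - (k + 1)).choose (k - i) ≤ sens (hasIsolatedClique k i v) := by
  obtain ⟨T, -, hT⟩ := Finset.exists_subset_card_eq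
    (show k + 1 ≤ (Finset.univ : Finset (Fin v)).card by simpa using hv)
  obtain ⟨J, hJT, hJ⟩ := Finset.exists_subset_card_eq (show i ≤ T.card by omega)
  have hTc : Tᶜ.card = v - (k + 1) := by rw [Finset.card_compl, hT, Fintype.card_fin]
  refine le_trans ?_ (localSens_le_sens _ (cliqueOn k T))
  rw [← hTc, ← Finset.card_powersetCard]
  have hdisj : ∀ K ∈ Finset.powersetCard (k - i) Tᶜ, Disjoint T K := by
    intro K hK
    exact Finset.disjoint_of_subset_right (Finset.mem_powersetCard.mp hK).1 disjoint_compl_right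
  have hmem : ∀ K ∈ Finset.powersetCard (k - i) Tᶜ, (J ∪ K).card = k := by
    intro K hK
    rw [Finset.card_union_of_disjoint (Finset.disjoint_of_subset_left hJT (hdisj K hK)), hJ,
      (Finset.mem_powersetCard.mp hK).2]
    omega
  have hinj : Set.InjOn (fun K => J ∪ K) (Finset.powersetCard (k - i) Tᶜ : Set (Finset (Fin v))) := by
    intro K hK K' hK' hE
    have h₁ := Finset.disjoint_of_subset_left hJT (hdisj K hK)
    have h₂ := Finset.disjoint_of_subset_left hJT (hdisj K' hK')
    rw [← Finset.union_sdiff_cancel_left h₁, ← Finset.union_sdiff_cancel_left h₂]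
    exact congrArg (· \ J) hE
  rw [← Finset.card_image_of_injOn hinj, localSens, ← Finset.card_map (Function.Embedding.subtype _)]
  refine Finset.card_le_card fun S hS => ?_
  obtain ⟨K, hK, rfl⟩ := Finset.mem_image.mp hS
  refine Finset.mem_map.mpr ⟨⟨J ∪ K, hmem K hK⟩, ?_, rfl⟩
  have hKne : ¬ J ∪ K ⊆ T := by
    intro hs
    have hKT := (Finset.subset_union_right (s₁ := J)).trans hs
    have hK0 : K = ∅ := Finset.disjoint_self_iff_empty K |>.mp
      (Finset.disjoint_of_subset_left hKT (hdisj K hK))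
    have hc := (Finset.mem_powersetCard.mp hK).2
    rw [hK0, Finset.card_empty] at hc
    omega
  have hmeet : i ≤ ((J ∪ K) ∩ T).card := by
    rw [← hJ]
    exact Finset.card_le_card (Finset.subset_inter Finset.subset_union_left hJT)
  rw [Finset.mem_filter, hasIsolatedClique_eq_true.mpr ⟨T, isIsolatedClique_cliqueOn hT⟩, ne_eq,
    hasIsolatedClique_eq_true]
  refine ⟨Finset.mem_univ _, ?_⟩
  rintro ⟨T', hT'⟩
  have hflip : (!cliqueOn k T ⟨J ∪ K, hmem K hK⟩) = true := by simp [cliqueOn, hKne]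
  rw [hflip] at hT'
  exact not_isIsolatedClique_update_cliqueOn hk (by omega) hT hmeet hKne hT'

/-- There are many `(k + 1)`-sets pairwise sharing fewer than `k` points: those with a given sum. -/
lemma exists_packing (hv : 0 < v) : ∃ F : Finset (Finset (Fin v)),
    v.choose (k + 1) ≤ v * F.card ∧ (∀ T ∈ F, T.card = k + 1) ∧
    ∀ T ∈ F, ∀ T' ∈ F, T ≠ T' → (T ∩ T').card < k := by
  have : NeZero v := ⟨hv.ne'⟩
  obtain ⟨r, -, hr⟩ := Finset.exists_le_card_fiber_of_nsmul_le_card_of_maps_to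
    (s := Finset.powersetCard (k + 1) (Finset.univ : Finset (Fin v))) (t := Finset.univ)
    (f := fun T => ∑ x ∈ T, x) (b := (v.choose (k + 1) : ℚ) / v)
    (fun _ _ => Finset.mem_univ _) ⟨0, Finset.mem_univ _⟩ (by
      have : (v : ℚ) ≠ 0 := by exact_mod_cast hv.ne'
      simp [Finset.card_powersetCard]
      field_simp
      exact le_rfl)
  refine ⟨(Finset.powersetCard (k + 1) (Finset.univ : Finset (Fin v))).filter
      fun T => ∑ x ∈ T, x = r, ?_,
    fun T hT => (Finset.mem_powersetCard.mp (Finset.mem_filter.mp hT).1).2, ?_⟩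
  · rw [div_le_iff₀' (by exact_mod_cast hv)] at hr
    exact_mod_cast hr
  · intro T hT T' hT' hne
    obtain ⟨hTc, hTs⟩ := Finset.mem_filter.mp hT
    obtain ⟨hTc', hTs'⟩ := Finset.mem_filter.mp hT'
    have hc := (Finset.mem_powersetCard.mp hTc).2
    have hc' := (Finset.mem_powersetCard.mp hTc').2
    by_contra hlt
    have h₁ := Finset.card_sdiff_add_card_inter T T'
    have h₂ := Finset.card_sdiff_add_card_inter T' T
    rw [Finset.inter_comm T' T] at h₂
    have hpos : (T \ T').card ≠ 0 := by
      rw [Finset.card_ne_zero, Finset.sdiff_nonempty]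
      exact fun hs => hne (Finset.eq_of_subset_of_card_le hs (by rw [hc, hc']))
    obtain ⟨a, ha⟩ := Finset.card_eq_one.mp (show (T \ T').card = 1 by omega)
    obtain ⟨b, hb⟩ := Finset.card_eq_one.mp (show (T' \ T).card = 1 by omega)
    have hs₁ := Finset.sum_inter_add_sum_sdiff T T' (fun x => x)
    have hs₂ := Finset.sum_inter_add_sum_sdiff T' T (fun x => x)
    rw [ha, Finset.sum_singleton, hTs] at hs₁
    rw [hb, Finset.sum_singleton, hTs', Finset.inter_comm, ← hs₁] at hs₂
    have hab : b = a := add_left_cancel hs₂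
    have haT : a ∈ T \ T' := ha ▸ Finset.mem_singleton_self a
    have hbT : b ∈ T' \ T := hb ▸ Finset.mem_singleton_self b
    exact (Finset.mem_sdiff.mp haT).2 (hab ▸ (Finset.mem_sdiff.mp hbT).1)

lemma choose_le_mul_blockSens (hik : i ≤ k) (hv : 0 < v) :
    v.choose (k + 1) ≤ v * blockSens (hasIsolatedClique k i v) := by
  obtain ⟨F, hF, hcard, hpack⟩ := exists_packing (k := k) hv
  refine hF.trans (Nat.mul_le_mul_left v ?_)
  refine card_le_blockSens _ (fun _ => false) F
    (fun T => Finset.univ.filter fun S : KSet v k => S.1 ⊆ T) ?_ ?_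
  · intro T hT
    have hflip : flipBlock (fun _ => false) (Finset.univ.filter fun S : KSet v k => S.1 ⊆ T) =
        cliqueOn k T := by
      funext S
      simp [flipBlock, cliqueOn]
    rw [hflip, hasIsolatedClique_eq_true.mpr ⟨T, isIsolatedClique_cliqueOn (hcard T hT)⟩, ne_comm,
      ne_eq, hasIsolatedClique_eq_true]
    rintro ⟨T', hT'⟩
    obtain ⟨S, hS, hSc⟩ := Finset.exists_subset_card_eq (show k ≤ T'.card by rw [hT'.1]; omega)
    exact Bool.noConfusion (hT'.apply_eq_true hik (S := ⟨S, hSc⟩) hS)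
  · intro T hT T' hT' hne
    refine Finset.disjoint_left.mpr fun S hS hS' => ?_
    have hle := Finset.card_le_card
      (Finset.subset_inter (Finset.mem_filter.mp hS).2 (Finset.mem_filter.mp hS').2)
    rw [S.2] at hle
    exact absurd (hpack T hT T' hT' hne) (not_lt.mpr hle)

end IsolatedClique

lemma pow_le_mul_choose {v n r : ℕ} (h : v ≤ 2 * (n + 1 - r)) :
    v ^ r ≤ 2 ^ r * r.factorial * n.choose r := by
  calc v ^ r ≤ (2 * (n + 1 - r)) ^ r := Nat.pow_le_pow_left h r
    _ = 2 ^ r * (n + 1 - r) ^ r := mul_pow _ _ _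
    _ ≤ 2 ^ r * (n.descFactorial r) :=
      Nat.mul_le_mul_left _ (Nat.pow_sub_le_descFactorial n r)
    _ = 2 ^ r * r.factorial * n.choose r := by
      rw [Nat.descFactorial_eq_factorial_mul_choose, mul_assoc]

theorem stmt10 (k i : ℕ) (hk : 2 ≤ k) (hi1 : 1 ≤ i) (hik : 2 * i ≤ k) :
    ∃ f : (v : ℕ) → (HGraph v k → Bool),
      (∀ v, IsHypergraphProperty (f v)) ∧
      ∃ c C : ℝ, 0 < c ∧ 0 < C ∧ ∃ v₀ : ℕ, ∀ v : ℕ, v₀ ≤ v →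
        c * (v : ℝ) ^ (k - i) ≤ (sens (f v) : ℝ) ∧
        (sens (f v) : ℝ) ≤ C * (v : ℝ) ^ (k - i) ∧
        c * (v : ℝ) ^ k ≤ (blockSens (f v) : ℝ) ∧
        (blockSens (f v) : ℝ) ≤ C * (v : ℝ) ^ k := by
  have hD : 0 < 2 ^ (k + 1) * (k + 1).factorial := by positivity
  refine ⟨hasIsolatedClique k i, isHypergraphProperty_hasIsolatedClique k i,
    ((2 ^ (k + 1) * (k + 1).factorial : ℕ) : ℝ)⁻¹, ((2 ^ (k + 1) : ℕ) : ℝ),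
    by positivity, by positivity, 4 * (k + 1), fun v hv => ⟨?_, ?_, ?_, ?_⟩⟩
  · rw [inv_mul_le_iff₀ (by exact_mod_cast hD)]
    have h₁ := pow_le_mul_choose (v := v) (n := v - (k + 1)) (r := k - i) (by omega)
    have h₂ := choose_le_sens_hasIsolatedClique (v := v) hk (show i + 1 ≤ k by omega) (by omega)
    have h₃ : 2 ^ (k - i) * (k - i).factorial ≤ 2 ^ (k + 1) * (k + 1).factorial :=
      Nat.mul_le_mul (Nat.pow_le_pow_right (by norm_num) (by omega))
        (Nat.factorial_le (by omega))
    exact_mod_cast h₁.trans (Nat.mul_le_mul h₃ h₂)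
  · have h := sens_hasIsolatedClique_le (v := v) hk (show i + 1 ≤ k by omega)
    have hle : max (v.choose i * 2) ((k + 1).choose i * v.choose (k - i)) ≤
        2 ^ (k + 1) * v ^ (k - i) := by
      refine max_le ?_ (Nat.mul_le_mul (Nat.choose_le_two_pow _ _) (Nat.choose_le_pow _ _))
      rw [mul_comm]
      refine Nat.mul_le_mul ?_ ((Nat.choose_le_pow _ _).trans
        (Nat.pow_le_pow_right (by omega) (by omega)))
      exact Nat.le_self_pow (by omega) 2
    exact_mod_cast h.trans hle
  · rw [inv_mul_le_iff₀ (by exact_mod_cast hD)]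
    have h₁ := pow_le_mul_choose (v := v) (n := v) (r := k + 1) (by omega)
    have h₂ := choose_le_mul_blockSens (v := v) (show i ≤ k by omega) (by omega)
    have h₃ : v * v ^ k ≤
        v * (2 ^ (k + 1) * (k + 1).factorial * blockSens (hasIsolatedClique k i v)) := by
      calc v * v ^ k = v ^ (k + 1) := (pow_succ' v k).symm
        _ ≤ _ := h₁.trans (Nat.mul_le_mul_left _ h₂)
        _ = _ := by ring
    exact_mod_cast Nat.le_of_mul_le_mul_left h₃ (by omega)
  · have h := blockSens_le_card (hasIsolatedClique k i v)
    rw [card_kSet] at h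
    have h₁ : v ^ k ≤ 2 ^ (k + 1) * v ^ k := Nat.le_mul_of_pos_left _ (by positivity)
    exact_mod_cast (h.trans (Nat.choose_le_pow v k)).trans h₁
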